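/- Minimax lower bounds under a quadratic KL control: let (p_θ)_{θ∈Θ} be a family of probability distributions on a measurable space, where Θ ⊆ ℝ^d with d ≥ 66 contains a Euclidean ball of radius r_0, and suppose γ > 0 satisfies KL(p_{θ_1}‖p_{θ_2}) ≤ γ‖θ_2 − θ_1‖² for all θ_1, θ_2 ∈ Θ. Then, for the i.i.d. model (p_θ^{⊗n})_{θ∈Θ}, the Euclidean metric and the squared loss: (i) the (non-private) minimax risk is at least min(r_0/√d, 1/(64√(nγ)))²·d/32; (ii) the minimax risk over ε-DP mechanisms is at least max( min(r_0/√d, 1/(64√(nγ))), min(r_0/√d, √d/(64²·√2·nε·√γ)) )²·d/32; (iii) for ρ < 1, the minimax risk over ρ-zCDP mechanisms is at least max( min(r_0/√d, 1/(64√(nγ))), min(r_0/√d, 1/(64²·2√2·n·√(ργ))) )²·d/32. -/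

import Mathlib

open MeasureTheory ProbabilityTheory Real
open scoped ENNReal NNReal

variable {𝓧 𝓨 : Type*} [MeasurableSpace 𝓧] [MeasurableSpace 𝓨]

/-- `(ε, δ)`-differential privacy of a Markov kernel on datasets of `n` points. -/
def IsDP [DecidableEq 𝓧] {n : ℕ} (M : Kernel (Fin n → 𝓧) 𝓨) (ε δ : ℝ) : Prop :=
  ∀ x y : Fin n → 𝓧, hammingDist x y ≤ 1 →
    ∀ S : Set 𝓨, MeasurableSet S →
      M x S ≤ ENNReal.ofReal (Real.exp ε) * M y S + ENNReal.ofReal δ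

open scoped Classical in
/-- The Renyi divergence of order `a`. -/
noncomputable def renyiDiv {α : Type*} [MeasurableSpace α] (a : ℝ) (P Q : Measure α) : ℝ≥0∞ :=
  if P ≪ Q ∧ ∫⁻ x, (P.rnDeriv Q x) ^ a ∂Q ≠ ⊤ then
    ENNReal.ofReal ((a - 1)⁻¹ * Real.log (∫⁻ x, (P.rnDeriv Q x) ^ a ∂Q).toReal)
  else ⊤

/-- `ρ`-zero-concentrated differential privacy of a Markov kernel. -/
def IsZCDP [DecidableEq 𝓧] {n : ℕ} (M : Kernel (Fin n → 𝓧) 𝓨) (ρ : ℝ) : Prop :=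
  ∀ x y : Fin n → 𝓧, hammingDist x y ≤ 1 → ∀ a : ℝ, 1 < a →
    renyiDiv a (M x) (M y) ≤ ENNReal.ofReal (ρ * a)

open scoped Classical in
/-- The Kullback-Leibler divergence `KL(P ‖ Q) = ∫ log (dP/dQ) dP`. -/
noncomputable def klDiv' {α : Type*} [MeasurableSpace α] (P Q : Measure α) : ℝ≥0∞ :=
  if P ≪ Q ∧ Integrable (llr P Q) P then ENNReal.ofReal (∫ x, llr P Q x ∂P) else ⊤

/-- The minimax risk over randomized mechanisms `M : 𝓧^n → Θ ⊆ ℝ^d` satisfying the privacy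
condition `C`, for the i.i.d. model `θ ↦ (p θ)^{⊗n}`, the Euclidean metric and the squared
loss: `inf_{M s.t. C} sup_{θ ∈ Θ} ∫ E_M[dist(M(X), θ)²] d(p θ)^{⊗n}(X)`. -/
noncomputable def privMinimax (𝓧 : Type*) [MeasurableSpace 𝓧] (d n : ℕ)
    (C : Kernel (Fin n → 𝓧) (EuclideanSpace ℝ (Fin d)) → Prop)
    (Θ : Set (EuclideanSpace ℝ (Fin d)))
    (p : EuclideanSpace ℝ (Fin d) → Measure 𝓧) : ℝ≥0∞ :=
  ⨅ M ∈ {M : Kernel (Fin n → 𝓧) (EuclideanSpace ℝ (Fin d)) |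
      IsMarkovKernel M ∧ C M ∧ ∀ x, ∀ᵐ t ∂(M x), t ∈ Θ},
    ⨆ θ ∈ Θ,
      ∫⁻ x, ∫⁻ t, ENNReal.ofReal (dist t θ ^ 2) ∂(M x)
        ∂(Measure.pi fun _ : Fin n => p θ)

/-- The (non-private) minimax risk over all estimators (measurable maps `𝓧^n → Θ`), for the
i.i.d. model `θ ↦ (p θ)^{⊗n}`, the Euclidean metric and the squared loss. -/
noncomputable def minimaxRisk (𝓧 : Type*) [MeasurableSpace 𝓧] (d n : ℕ)
    (Θ : Set (EuclideanSpace ℝ (Fin d)))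
    (p : EuclideanSpace ℝ (Fin d) → Measure 𝓧) : ℝ≥0∞ :=
  ⨅ f ∈ {f : (Fin n → 𝓧) → EuclideanSpace ℝ (Fin d) | Measurable f ∧ ∀ x, f x ∈ Θ},
    ⨆ θ ∈ Θ,
      ∫⁻ x, ENNReal.ofReal (dist (f x) θ ^ 2) ∂(Measure.pi fun _ : Fin n => p θ)

/-! The parameters are restricted to the cube `c + τ {±1}^d`, contained in the ball for
`τ ≤ r₀ / √d`.

If flipping one sign changes the law of the output by at most `δ < 1` in total variation, Assouad's
lemma bounds the risk below by a multiple of `τ² d`. Without privacy, the tensorization of the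
divergence and Pinsker's inequality give `δ ≲ τ √(n γ)`. Under zCDP one replaces the `n`
observations one at a time: each replacement is needed only with probability
`TV(p θ₁, p θ₂) ≲ τ √γ` and moves the output law by at most `√ρ`, so `δ ≲ n τ √(ρ γ)`.

Under `ε`-DP each replacement multiplies the output law by at most `exp ε`, so replacing the sample
of a vertex by a sample of the centre costs a factor `(1 + TV · (exp ε - 1))^n` with
`TV ≲ τ √(d γ)`. While this is at most `exp (d / 100)`, the output laws of all `2^d` vertices are
dominated by that multiple of a single law, which cannot concentrate near `2^d` separated points. -/

section KullbackLeibler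

open InformationTheory

variable {α β : Type*} [MeasurableSpace α] [MeasurableSpace β]

lemma klDiv'_eq_klDiv (P Q : Measure α) [IsProbabilityMeasure P] [IsProbabilityMeasure Q] :
    klDiv' P Q = klDiv P Q := by
  unfold klDiv'
  split_ifs with h
  · simp [klDiv_of_ac_of_integrable h.1 h.2]
  · rw [eq_comm, klDiv_eq_top_iff]
    exact fun hac hint ↦ h ⟨hac, hint⟩

lemma klDiv_map_measurableEquiv (P Q : Measure α) [IsFiniteMeasure P] [IsFiniteMeasure Q]
    (e : α ≃ᵐ β) :
    klDiv (P.map e) (Q.map e) = klDiv P Q := by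
  refine le_antisymm (klDiv_map_le P Q e.measurable) ?_
  simpa only [MeasurableEquiv.map_symm_map] using
    klDiv_map_le (P.map e) (Q.map e) e.symm.measurable

lemma klDiv_prod (P₁ Q₁ : Measure α) (P₂ Q₂ : Measure β) [IsProbabilityMeasure P₁]
    [IsFiniteMeasure Q₁] [IsProbabilityMeasure P₂] [IsProbabilityMeasure Q₂] :
    klDiv (P₁.prod P₂) (Q₁.prod Q₂) =
      klDiv P₁ Q₁ + klDiv P₂ Q₂ := by
  have swap : klDiv (P₁.prod P₂) (P₁.prod Q₂) =
      klDiv (P₂.prod P₁) (Q₂.prod P₁) := by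
    rw [← Measure.prod_swap (μ := P₁), ← Measure.prod_swap (μ := P₁)]
    exact (klDiv_map_measurableEquiv _ _ MeasurableEquiv.prodComm).symm
  simp only [← Measure.compProd_const] at swap ⊢
  rw [klDiv_compProd_eq_add, swap, klDiv_compProd_left]

lemma klDiv_pi_const (P Q : Measure α) [IsProbabilityMeasure P] [IsProbabilityMeasure Q] (n : ℕ) :
    klDiv (Measure.pi fun _ : Fin n ↦ P) (Measure.pi fun _ : Fin n ↦ Q) =
      n * klDiv P Q := by
  induction n with
  | zero => simp [Measure.pi_of_empty _ Fin.elim0]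
  | succ n ih =>
    have split (R : Measure α) [IsProbabilityMeasure R] :=
      (measurePreserving_piFinSuccAbove (fun _ : Fin (n + 1) ↦ R) 0).map_eq
    rw [← klDiv_map_measurableEquiv _ _ (MeasurableEquiv.piFinSuccAbove (fun _ ↦ α) 0),
      split P, split Q, klDiv_prod, ih]
    push_cast
    ring

end KullbackLeibler

section TotalVariation

open InformationTheory

variable {α : Type*} [MeasurableSpace α]

/-- The total variation distance `sup_S (P S - Q S)` of two probability measures. One truncated
difference suffices, since complementation exchanges the roles of `P` and `Q`. -/
noncomputable def tvDist (P Q : Measure α) : ℝ≥0∞ :=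
  ⨆ (S : Set α) (_ : MeasurableSet S), P S - Q S

lemma measure_le_add_tvDist (P Q : Measure α) {S : Set α} (hS : MeasurableSet S) :
    P S ≤ Q S + tvDist P Q :=
  tsub_le_iff_left.mp (le_iSup₂_of_le S hS le_rfl)

lemma tvDist_le_iff {P Q : Measure α} {t : ℝ≥0∞} :
    tvDist P Q ≤ t ↔ ∀ S, MeasurableSet S → P S ≤ Q S + t := by
  simp only [tvDist, iSup_le_iff, tsub_le_iff_left]

lemma tvDist_le_one (P Q : Measure α) [IsProbabilityMeasure P] : tvDist P Q ≤ 1 :=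
  tvDist_le_iff.mpr fun _ _ ↦ prob_le_one.trans le_add_self

lemma exists_le_add_of_tvDist (P Q : Measure α) [IsFiniteMeasure P] [IsFiniteMeasure Q] :
    ∃ D : Measure α, P ≤ Q + D ∧ D Set.univ ≤ tvDist P Q := by
  obtain ⟨H, hH⟩ := exists_isHahnDecomposition Q P
  refine ⟨P.restrict H - Q.restrict H, ?_, ?_⟩
  · calc P = P.restrict H + P.restrict Hᶜ := (Measure.restrict_add_restrict_compl hH.1).symm
      _ ≤ (P.restrict H - Q.restrict H + Q.restrict H) + Q.restrict Hᶜ := by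
        rw [Measure.sub_add_cancel_of_le hH.le_on]
        exact add_le_add_right hH.ge_on_compl _
      _ = Q + (P.restrict H - Q.restrict H) := by
        rw [add_assoc, Measure.restrict_add_restrict_compl hH.1, add_comm]
  · rw [Measure.sub_apply MeasurableSet.univ hH.le_on, Measure.restrict_apply_univ,
      Measure.restrict_apply_univ]
    exact le_iSup₂_of_le H hH.1 le_rfl

lemma lintegral_le_add_tvDist_mul (P Q : Measure α) [IsProbabilityMeasure P]
    [IsProbabilityMeasure Q] {g : α → ℝ≥0∞} {a b : ℝ≥0∞} (ha : ∀ x, a ≤ g x)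
    (hb : ∀ x, g x ≤ a + b) :
    ∫⁻ x, g x ∂P ≤ ∫⁻ x, g x ∂Q + tvDist P Q * b := by
  obtain ⟨D, hPD, hD⟩ := exists_le_add_of_tvDist P Q
  have split (μ : Measure α) [IsProbabilityMeasure μ] :
      ∫⁻ x, g x ∂μ = a + ∫⁻ x, (g x - a) ∂μ := by
    rw [lintegral_congr fun x ↦ (add_tsub_cancel_of_le (ha x)).symm,
      lintegral_add_left measurable_const, lintegral_const, measure_univ, mul_one]
  calc ∫⁻ x, g x ∂P = a + ∫⁻ x, (g x - a) ∂P := split P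
    _ ≤ a + ∫⁻ x, (g x - a) ∂(Q + D) := by gcongr
    _ = ∫⁻ x, g x ∂Q + ∫⁻ x, (g x - a) ∂D := by rw [lintegral_add_measure, split Q, add_assoc]
    _ ≤ ∫⁻ x, g x ∂Q + ∫⁻ _, b ∂D := by
      gcongr with x
      exact tsub_le_iff_left.mpr (hb x)
    _ ≤ ∫⁻ x, g x ∂Q + tvDist P Q * b := by
      rw [lintegral_const, mul_comm]
      gcongr

lemma donskerVaradhan_integral_le {P Q : Measure α} [IsProbabilityMeasure P]
    [IsProbabilityMeasure Q] (hPQ : klDiv P Q ≠ ∞) {h : α → ℝ} (hP : Integrable h P)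
    (hQ : Integrable (fun x ↦ exp (h x)) Q) :
    ∫ x, h x ∂P ≤ (klDiv P Q).toReal + log (∫ x, exp (h x) ∂Q) := by
  obtain ⟨hac, hllr⟩ := klDiv_ne_top_iff.mp hPQ
  have := isProbabilityMeasure_tilted hQ
  have gibbs := integral_llr_add_sub_measure_univ_nonneg
    (hac.trans (absolutelyContinuous_tilted hQ)) (integrable_llr_tilted_right hac hP hllr hQ)
  rw [integral_llr_tilted_right hac hP hQ hllr] at gibbs
  rw [toReal_klDiv_of_measure_eq hac (by simp)]
  simp only [probReal_univ, add_sub_cancel_right] at gibbs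
  linarith

-- Donsker-Varadhan for `l (1_S - Q S)` and Hoeffding's lemma bound a quadratic in `l` from below;
-- its discriminant is the claim.
lemma pinsker_measureReal {P Q : Measure α} [IsProbabilityMeasure P]
    [IsProbabilityMeasure Q] (hPQ : klDiv P Q ≠ ∞) {S : Set α} (hS : MeasurableSet S) :
    2 * (P.real S - Q.real S) ^ 2 ≤ (klDiv P Q).toReal := by
  let X : α → ℝ := S.indicator 1
  have hX (μ : Measure α) : ∫ x, X x ∂μ = μ.real S := integral_indicator_one hS
  have hXint (μ : Measure α) [IsFiniteMeasure μ] : Integrable X μ :=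
    (integrable_const (1 : ℝ)).indicator hS
  have hoeffding : HasSubgaussianMGF (fun x ↦ X x - Q.real S) ((‖(1 : ℝ) - 0‖₊ / 2) ^ 2) Q := by
    rw [← hX Q]
    refine hasSubgaussianMGF_of_mem_Icc (measurable_one.indicator hS).aemeasurable (.of_forall ?_)
    intro x
    by_cases hx : x ∈ S <;> simp [X, hx]
  have quadratic (l : ℝ) :
      0 ≤ 1 / 8 * (l * l) + -(P.real S - Q.real S) * l + (klDiv P Q).toReal := by
    have dv := donskerVaradhan_integral_le hPQ (h := fun x ↦ l * (X x - Q.real S))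
      (((hXint P).sub (integrable_const _)).const_mul l) (hoeffding.integrable_exp_mul l)
    have mgf_le : log (∫ x, exp (l * (X x - Q.real S)) ∂Q) ≤ 1 / 8 * (l * l) := by
      refine (log_le_log (integral_exp_pos (hoeffding.integrable_exp_mul l))
        (hoeffding.mgf_le l)).trans_eq ?_
      rw [log_exp]
      norm_num
      ring
    rw [integral_const_mul, integral_sub (hXint P) (integrable_const _), hX] at dv
    simp only [integral_const, probReal_univ, one_smul] at dv
    linarith
  have := discrim_le_zero quadratic
  rw [discrim] at this
  linarith

lemma tvDist_le_sqrt_of_klDiv_le {P Q : Measure α} [IsProbabilityMeasure P]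
    [IsProbabilityMeasure Q] {κ : ℝ} (h : klDiv P Q ≤ ENNReal.ofReal κ) :
    tvDist P Q ≤ ENNReal.ofReal √(κ / 2) := by
  refine tvDist_le_iff.mpr fun S hS ↦ ?_
  rcases le_or_gt κ 0 with hκ | hκ
  · have hPQ : P = Q := by
      rw [ENNReal.ofReal_of_nonpos hκ, nonpos_iff_eq_zero] at h
      exact klDiv_eq_zero_iff.mp h
    simp [hPQ]
  have pinsker := pinsker_measureReal (ne_top_of_le_ne_top (by simp) h) hS
  have hκ' := ENNReal.toReal_le_of_le_ofReal hκ.le h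
  rw [← ofReal_measureReal (μ := P), ← ofReal_measureReal (μ := Q),
    ← ENNReal.ofReal_add measureReal_nonneg (by positivity)]
  refine ENNReal.ofReal_le_ofReal (sub_le_iff_le_add'.mp (Real.le_sqrt_of_sq_le ?_))
  linarith

end TotalVariation

section Renyi

open InformationTheory

variable {α : Type*} [MeasurableSpace α]

-- `log` lies below its tangent at `I`. With `I = ∫ x ^ a` this integrates to the Rényi divergence.
lemma klFun_le_of_one_lt {a x I : ℝ} (ha : 1 < a) (hx : 0 ≤ x) (hI : 0 < I) :
    klFun x ≤ (a - 1)⁻¹ / I * x ^ a + ((a - 1)⁻¹ * (log I - 1) - 1) * x + 1 := by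
  rcases hx.eq_or_lt with rfl | hx
  · simp [klFun_zero, zero_rpow (zero_lt_one.trans ha).ne']
  have : 0 < (a - 1)⁻¹ := inv_pos.mpr (sub_pos.mpr ha)
  have hlog : (a - 1) * log x ≤ x ^ (a - 1) / I - 1 + log I := by
    have := log_le_sub_one_of_pos (div_pos (rpow_pos_of_pos hx (a - 1)) hI)
    rw [log_div (rpow_pos_of_pos hx _).ne' hI.ne', log_rpow hx] at this
    linarith
  have hpow : x ^ a = x * x ^ (a - 1) := by
    rw [← rpow_one_add' hx.le (by linarith), add_sub_cancel]
  calc klFun x = (a - 1)⁻¹ * ((a - 1) * log x) * x + (1 - x) := by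
        rw [klFun_apply, inv_mul_cancel_left₀ (sub_pos.mpr ha).ne']
        ring
    _ ≤ (a - 1)⁻¹ * (x ^ (a - 1) / I - 1 + log I) * x + (1 - x) := by gcongr
    _ = (a - 1)⁻¹ / I * x ^ a + ((a - 1)⁻¹ * (log I - 1) - 1) * x + 1 := by rw [hpow]; ring

lemma integrable_toReal_rpow {μ : Measure α} {f : α → ℝ≥0∞}
    (hf : AEMeasurable f μ) {a : ℝ} (h : ∫⁻ x, f x ^ a ∂μ ≠ ∞) :
    Integrable (fun x ↦ (f x).toReal ^ a) μ := by
  simp_rw [ENNReal.toReal_rpow]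
  exact integrable_toReal_of_lintegral_ne_top (hf.pow_const a) h

lemma integral_toReal_rpow {μ : Measure α} {f : α → ℝ≥0∞}
    (hf : AEMeasurable f μ) {a : ℝ} (h : ∫⁻ x, f x ^ a ∂μ ≠ ∞) :
    ∫ x, (f x).toReal ^ a ∂μ = (∫⁻ x, f x ^ a ∂μ).toReal := by
  simp_rw [ENNReal.toReal_rpow]
  exact integral_toReal (hf.pow_const a) (ae_lt_top' (hf.pow_const a) h)

lemma lintegral_rnDeriv_rpow_ne_zero {P Q : Measure α}
    [SigmaFinite P] [SigmaFinite Q] [NeZero P] (hac : P ≪ Q) {a : ℝ} (ha : 0 < a) :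
    ∫⁻ x, P.rnDeriv Q x ^ a ∂Q ≠ 0 := by
  intro h
  rw [lintegral_eq_zero_iff (by fun_prop)] at h
  refine NeZero.ne P (Measure.eq_zero_of_absolutelyContinuous_of_mutuallySingular hac
    ((Measure.rnDeriv_eq_zero P Q).mp ?_))
  filter_upwards [h] with x hx
  exact (ENNReal.rpow_eq_zero_iff_of_pos ha).mp hx

lemma klDiv_le_log_lintegral_rnDeriv_rpow {P Q : Measure α}
    [IsProbabilityMeasure P] [IsProbabilityMeasure Q] {a : ℝ} (ha : 1 < a) (hac : P ≪ Q)
    (hfin : ∫⁻ x, P.rnDeriv Q x ^ a ∂Q ≠ ∞) :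
    klDiv P Q ≤
      ENNReal.ofReal ((a - 1)⁻¹ * log (∫⁻ x, P.rnDeriv Q x ^ a ∂Q).toReal) := by
  set I := (∫⁻ x, P.rnDeriv Q x ^ a ∂Q).toReal
  let r : α → ℝ := fun x ↦ (P.rnDeriv Q x).toReal
  let A := (a - 1)⁻¹ / I
  let B := (a - 1)⁻¹ * (log I - 1) - 1
  have hI : 0 < I := ENNReal.toReal_pos (lintegral_rnDeriv_rpow_ne_zero hac (by linarith)) hfin
  have hpow_int : Integrable (fun x ↦ r x ^ a) Q := integrable_toReal_rpow (by fun_prop) hfin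
  have hpow_eq : ∫ x, r x ^ a ∂Q = I := integral_toReal_rpow (by fun_prop) hfin
  have hr_int : Integrable r Q := Measure.integrable_toReal_rnDeriv
  have hr_eq : ∫ x, r x ∂Q = 1 := by
    rw [Measure.integral_toReal_rnDeriv hac, probReal_univ]
  have hAB_int : Integrable (fun x ↦ A * r x ^ a + B * r x) Q :=
    (hpow_int.const_mul A).add (hr_int.const_mul B)
  have hint : Integrable (fun x ↦ A * r x ^ a + B * r x + 1) Q := hAB_int.add (integrable_const 1)
  have bound (x : α) : klFun (r x) ≤ A * r x ^ a + B * r x + 1 :=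
    klFun_le_of_one_lt ha ENNReal.toReal_nonneg hI
  calc klDiv P Q = ∫⁻ x, ENNReal.ofReal (klFun (r x)) ∂Q := klDiv_eq_lintegral_klFun_of_ac hac
    _ ≤ ∫⁻ x, ENNReal.ofReal (A * r x ^ a + B * r x + 1) ∂Q := by
        gcongr with x
        exact bound x
    _ = ENNReal.ofReal (A * I + B + 1) := by
        rw [← ofReal_integral_eq_lintegral_ofReal hint
          (.of_forall fun x ↦ (klFun_nonneg ENNReal.toReal_nonneg).trans (bound x)),
          integral_add hAB_int (integrable_const 1),
          integral_add (hpow_int.const_mul A) (hr_int.const_mul B), integral_const_mul,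
          integral_const_mul, hpow_eq, hr_eq, integral_const, probReal_univ, one_smul, mul_one]
    _ = ENNReal.ofReal ((a - 1)⁻¹ * log I) := by
        congr 1
        simp only [A, B]
        rw [div_mul_cancel₀ _ hI.ne']
        ring

lemma klDiv_le_renyiDiv (P Q : Measure α)
    [IsProbabilityMeasure P] [IsProbabilityMeasure Q] {a : ℝ} (ha : 1 < a) :
    klDiv P Q ≤ renyiDiv a P Q := by
  unfold renyiDiv
  split_ifs with h
  · exact klDiv_le_log_lintegral_rnDeriv_rpow ha h.1 h.2
  · exact le_top

end Renyi

section Product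

variable {ι : Type*} [DecidableEq ι] {X : ι → Type*} [∀ i, MeasurableSpace (X i)]
  {P Q : ∀ i, Measure (X i)} [∀ i, IsProbabilityMeasure (P i)] [∀ i, IsProbabilityMeasure (Q i)]
  {f : (∀ i, X i) → ℝ≥0∞}

lemma measurable_lintegral_update (μ : ∀ i, Measure (X i)) [∀ i, SFinite (μ i)]
    (hf : Measurable f) (i : ι) :
    Measurable fun x ↦ ∫⁻ a, f (Function.update x i a) ∂μ i :=
  (hf.comp measurable_update').lintegral_prod_right'

lemma lintegral_update_update_comm (hf : Measurable f) {i j : ι} (hij : i ≠ j) (μ : Measure (X i))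
    (ν : Measure (X j)) [SFinite μ] [SFinite ν] (x : ∀ i, X i) :
    ∫⁻ a, ∫⁻ b, f (Function.update (Function.update x i a) j b) ∂ν ∂μ =
      ∫⁻ b, ∫⁻ a, f (Function.update (Function.update x j b) i a) ∂μ ∂ν := by
  simp_rw [Function.update_comm hij]
  rw [lintegral_lintegral_swap]
  have : Measurable fun p : X i × X j ↦ Function.update (Function.update x j p.2) i p.1 :=
    measurable_update'.comp (((measurable_update x).comp measurable_snd).prodMk measurable_fst)
  exact (hf.comp this).aemeasurable

lemma lintegral_mul_add_const {α : Type*} [MeasurableSpace α] (μ : Measure α)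
    [IsProbabilityMeasure μ] {g : α → ℝ≥0∞} (hg : Measurable g) (A B : ℝ≥0∞) :
    ∫⁻ a, (A * g a + B) ∂μ = A * ∫⁻ a, g a ∂μ + B := by
  rw [lintegral_add_right _ measurable_const, lintegral_const_mul _ hg, lintegral_const,
    measure_univ, mul_one]

lemma lintegral_update_le_of_lintegral_update_le (hf : Measurable f) {A B : ℝ≥0∞} {i j : ι}
    (hij : i ≠ j) (h : ∀ x, ∫⁻ b, f (Function.update x j b) ∂P j ≤
      A * ∫⁻ b, f (Function.update x j b) ∂Q j + B) (x : ∀ i, X i) :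
    ∫⁻ b, ∫⁻ a, f (Function.update (Function.update x j b) i a) ∂Q i ∂P j ≤
      A * ∫⁻ b, ∫⁻ a, f (Function.update (Function.update x j b) i a) ∂Q i ∂Q j + B := by
  simp only [← lintegral_update_update_comm hf hij]
  exact (lintegral_mono fun a ↦ h _).trans_eq (lintegral_mul_add_const (Q i)
    ((measurable_lintegral_update Q hf j).comp (measurable_update x)) A B)

lemma lmarginal_le_of_lintegral_update_le (A B : ℝ≥0∞) (s : Finset ι) (hf : Measurable f)
    (h : ∀ i ∈ s, ∀ x, ∫⁻ a, f (Function.update x i a) ∂P i ≤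
      A * ∫⁻ a, f (Function.update x i a) ∂Q i + B) (x : ∀ i, X i) :
    (∫⋯∫⁻_s, f ∂P) x ≤
      A ^ s.card * (∫⋯∫⁻_s, f ∂Q) x + B * ∑ k ∈ Finset.range s.card, A ^ k := by
  induction s using Finset.induction_on generalizing f with
  | empty => simp
  | insert i s hi ih =>
    let G : (∀ i, X i) → ℝ≥0∞ := fun x ↦ ∫⁻ a, f (Function.update x i a) ∂Q i
    have hGmeas : Measurable G := measurable_lintegral_update Q hf i
    have hGbound : ∀ j ∈ s, ∀ x, ∫⁻ b, G (Function.update x j b) ∂P j ≤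
        A * ∫⁻ b, G (Function.update x j b) ∂Q j + B := fun j hj ↦
      lintegral_update_le_of_lintegral_update_le hf (ne_of_mem_of_not_mem hj hi).symm
        (h j (Finset.mem_insert_of_mem hj))
    calc (∫⋯∫⁻_insert i s, f ∂P) x
        = (∫⋯∫⁻_s, (fun x ↦ ∫⁻ a, f (Function.update x i a) ∂P i) ∂P) x := by
          rw [lmarginal_insert' _ hf hi]
      _ ≤ (∫⋯∫⁻_s, (fun x ↦ A * G x + B) ∂P) x :=
          lmarginal_mono (fun x ↦ h i (Finset.mem_insert_self i s) x) x
      _ = A * (∫⋯∫⁻_s, G ∂P) x + B :=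
          lintegral_mul_add_const _ (hGmeas.comp measurable_updateFinset) A B
      _ ≤ A * (A ^ s.card * (∫⋯∫⁻_s, G ∂Q) x + B * ∑ k ∈ Finset.range s.card, A ^ k) + B := by
          gcongr
          exact ih hGmeas hGbound
      _ = A ^ (insert i s).card * (∫⋯∫⁻_insert i s, f ∂Q) x +
            B * ∑ k ∈ Finset.range (insert i s).card, A ^ k := by
          rw [lmarginal_insert' _ hf hi, Finset.card_insert_of_notMem hi, Finset.sum_range_succ',
            Finset.sum_congr rfl fun k _ ↦ pow_succ' A k, ← Finset.mul_sum]
          ring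

lemma lintegral_pi_le_of_lintegral_update_le [Fintype ι] (A B : ℝ≥0∞) (hf : Measurable f)
    (h : ∀ i x, ∫⁻ a, f (Function.update x i a) ∂P i ≤
      A * ∫⁻ a, f (Function.update x i a) ∂Q i + B) :
    ∫⁻ x, f x ∂Measure.pi P ≤ A ^ Fintype.card ι * ∫⁻ x, f x ∂Measure.pi Q +
      B * ∑ k ∈ Finset.range (Fintype.card ι), A ^ k := by
  have (i : ι) : Nonempty (X i) := (P i).nonempty_of_neZero
  simpa using lmarginal_le_of_lintegral_update_le A B Finset.univ hf (fun i _ ↦ h i)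
    (fun i ↦ Classical.arbitrary (X i))

lemma lintegral_pi_le_add_of_update_le_add [Fintype ι] {t b : ℝ≥0∞}
    (ht : ∀ i, tvDist (P i) (Q i) ≤ t) (hf : Measurable f)
    (h : ∀ x i a, f (Function.update x i a) ≤ f x + b) :
    ∫⁻ x, f x ∂Measure.pi P ≤ ∫⁻ x, f x ∂Measure.pi Q + t * b * Fintype.card ι := by
  have step (i : ι) (x : ∀ i, X i) : ∫⁻ a, f (Function.update x i a) ∂P i ≤
      1 * ∫⁻ a, f (Function.update x i a) ∂Q i + t * b := by
    rw [one_mul]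
    refine (lintegral_le_add_tvDist_mul (P i) (Q i) (fun a ↦ iInf_le _ a) fun a ↦ ?_).trans
      (by gcongr; exact ht i)
    rw [ENNReal.iInf_add]
    refine le_iInf fun a' ↦ ?_
    simpa using h (Function.update x i a') i a
  simpa using lintegral_pi_le_of_lintegral_update_le 1 (t * b) hf step

lemma lintegral_pi_le_mul_of_update_le_mul [Fintype ι] {t b : ℝ≥0∞} (hb : b ≠ ∞)
    (ht : ∀ i, tvDist (P i) (Q i) ≤ t) (hf : Measurable f)
    (h : ∀ x i a, f (Function.update x i a) ≤ (1 + b) * f x) :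
    ∫⁻ x, f x ∂Measure.pi P ≤ (1 + t * b) ^ Fintype.card ι * ∫⁻ x, f x ∂Measure.pi Q := by
  have step (i : ι) (x : ∀ i, X i) : ∫⁻ a, f (Function.update x i a) ∂P i ≤
      (1 + t * b) * ∫⁻ a, f (Function.update x i a) ∂Q i + 0 := by
    set m := ⨅ a, f (Function.update x i a)
    have hm : m ≤ ∫⁻ a, f (Function.update x i a) ∂Q i := iInf_le_lintegral _
    calc ∫⁻ a, f (Function.update x i a) ∂P i
        ≤ ∫⁻ a, f (Function.update x i a) ∂Q i + tvDist (P i) (Q i) * (b * m) := by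
          refine lintegral_le_add_tvDist_mul (P i) (Q i) (fun a ↦ iInf_le _ a) fun a ↦ ?_
          rw [← one_add_mul, ENNReal.mul_iInf_of_ne (by simp) (by simp [hb])]
          refine le_iInf fun a' ↦ ?_
          simpa using h (Function.update x i a') i a
      _ ≤ ∫⁻ a, f (Function.update x i a) ∂Q i +
            t * (b * ∫⁻ a, f (Function.update x i a) ∂Q i) := by
          gcongr
          exact ht i
      _ = (1 + t * b) * ∫⁻ a, f (Function.update x i a) ∂Q i + 0 := by ring
  simpa using lintegral_pi_le_of_lintegral_update_le (1 + t * b) 0 hf step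

end Product

section Hypercube

variable {ι : Type*}

lemma intCast_units_sq (u : ℤˣ) : ((u : ℤ) : ℝ) ^ 2 = 1 := by
  rcases Int.units_eq_one_or u with rfl | rfl <;> simp

section WrongSide

variable (c : EuclideanSpace ℝ ι) (τ : ℝ) (v : ι → ℤˣ)

/-- The half-space on which `t` points away from the vertex `v` in the direction `i`. -/
def wrongSide (i : ι) : Set (EuclideanSpace ℝ ι) := {t | (t i - c i) * (v i : ℤ) ≤ 0}

lemma measurableSet_wrongSide (i : ι) : MeasurableSet (wrongSide c v i) := by
  unfold wrongSide
  measurability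

lemma sq_le_sq_sub_of_mem_wrongSide {i : ι} {t : EuclideanSpace ℝ ι} (hτ : 0 ≤ τ)
    (ht : t ∈ wrongSide c v i) : τ ^ 2 ≤ (t i - c i - τ * (v i : ℤ)) ^ 2 := by
  have := intCast_units_sq (v i)
  have ht' : τ * ((t i - c i) * (v i : ℤ)) ≤ 0 := mul_nonpos_of_nonneg_of_nonpos hτ ht
  calc τ ^ 2 ≤ (t i - c i) ^ 2 - 2 * (τ * ((t i - c i) * (v i : ℤ))) + τ ^ 2 * (v i : ℤ) ^ 2 := by
        rw [this]
        nlinarith [sq_nonneg (t i - c i)]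
    _ = (t i - c i - τ * (v i : ℤ)) ^ 2 := by ring

lemma wrongSide_union_wrongSide_update_neg [DecidableEq ι] (i : ι) :
    wrongSide c v i ∪ wrongSide c (Function.update v i (-v i)) i = Set.univ := by
  refine Set.eq_univ_of_forall fun t ↦ ?_
  simpa [wrongSide] using le_total ((t i - c i) * (v i : ℤ)) 0

lemma one_sub_le_measure_wrongSide_add [DecidableEq ι] (i : ι)
    (P Q : Measure (EuclideanSpace ℝ ι)) [IsProbabilityMeasure P] {δ : ℝ≥0∞}
    (h : tvDist P Q ≤ δ) :
    1 - δ ≤ P (wrongSide c v i) + Q (wrongSide c (Function.update v i (-v i)) i) := by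
  set w := Function.update v i (-v i)
  rw [tsub_le_iff_right]
  calc 1 = P (wrongSide c v i ∪ wrongSide c w i) := by
        rw [wrongSide_union_wrongSide_update_neg, measure_univ]
    _ ≤ P (wrongSide c v i) + P (wrongSide c w i) := measure_union_le _ _
    _ ≤ P (wrongSide c v i) + (Q (wrongSide c w i) + δ) := by
        gcongr
        exact (measure_le_add_tvDist _ _ (measurableSet_wrongSide c w i)).trans (by gcongr)
    _ = _ := (add_assoc _ _ _).symm

end WrongSide

variable [Fintype ι]

/-- The vertex `c + τ v` of the cube of half-side `τ` centred at `c`, for a sign vector `v`. -/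
noncomputable def cubeVertex (c : EuclideanSpace ℝ ι) (τ : ℝ) (v : ι → ℤˣ) : EuclideanSpace ℝ ι :=
  WithLp.toLp 2 fun i ↦ c i + τ * (v i : ℤ)

variable (c : EuclideanSpace ℝ ι) (τ : ℝ) (v : ι → ℤˣ)

lemma dist_cubeVertex_sq (t : EuclideanSpace ℝ ι) :
    dist t (cubeVertex c τ v) ^ 2 = ∑ i, (t i - c i - τ * (v i : ℤ)) ^ 2 := by
  simp [EuclideanSpace.dist_sq_eq, cubeVertex, Real.dist_eq, sub_sub]

lemma dist_cubeVertex_center_sq :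
    dist (cubeVertex c τ v) c ^ 2 = Fintype.card ι * τ ^ 2 := by
  rw [dist_comm, dist_cubeVertex_sq]
  simp [mul_pow, intCast_units_sq]

lemma dist_cubeVertex_update_neg_sq [DecidableEq ι] (i : ι) :
    dist (cubeVertex c τ (Function.update v i (-v i))) (cubeVertex c τ v) ^ 2 = 4 * τ ^ 2 := by
  rw [dist_cubeVertex_sq, Finset.sum_eq_single i]
  · have := intCast_units_sq (v i)
    simp only [cubeVertex, Function.update_self, Units.val_neg, Int.cast_neg]
    linear_combination 4 * τ ^ 2 * this
  · intro j _ hj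
    simp [cubeVertex, Function.update_of_ne hj]
  · simp

lemma cubeVertex_mem_closedBall {r : ℝ} (hτ : 0 ≤ τ) (hr : 0 ≤ r)
    (h : τ ≤ r / √(Fintype.card ι)) : cubeVertex c τ v ∈ Metric.closedBall c r := by
  refine Metric.mem_closedBall.mpr (abs_le_of_sq_le_sq' ?_ hr).2
  rw [dist_cubeVertex_center_sq, ← Real.sq_sqrt (Nat.cast_nonneg (Fintype.card ι)), ← mul_pow,
    mul_comm]
  gcongr
  exact mul_le_of_le_div₀ hr (Real.sqrt_nonneg _) h

lemma sum_measure_wrongSide_le_lintegral_dist_sq (hτ : 0 ≤ τ)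
    (μ : Measure (EuclideanSpace ℝ ι)) :
    ENNReal.ofReal (τ ^ 2) * ∑ i, μ (wrongSide c v i) ≤
      ∫⁻ t, ENNReal.ofReal (dist t (cubeVertex c τ v) ^ 2) ∂μ := by
  simp_rw [dist_cubeVertex_sq, ENNReal.ofReal_sum_of_nonneg fun _ _ ↦ sq_nonneg _]
  rw [lintegral_finsetSum _ (fun _ _ ↦ by fun_prop), Finset.mul_sum]
  gcongr with i
  calc ENNReal.ofReal (τ ^ 2) * μ (wrongSide c v i)
      = ∫⁻ _ in wrongSide c v i, ENNReal.ofReal (τ ^ 2) ∂μ := (setLIntegral_const _ _).symm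
    _ ≤ ∫⁻ t in wrongSide c v i, ENNReal.ofReal ((t i - c i - τ * (v i : ℤ)) ^ 2) ∂μ :=
      setLIntegral_mono (by fun_prop) fun t ht ↦
        ENNReal.ofReal_le_ofReal (sq_le_sq_sub_of_mem_wrongSide c τ v hτ ht)
    _ ≤ ∫⁻ t, ENNReal.ofReal ((t i - c i - τ * (v i : ℤ)) ^ 2) ∂μ := setLIntegral_le_lintegral _ _

lemma le_iSup_of_card_mul_le_sum {α : Type*} [Fintype α] [Nonempty α] {f : α → ℝ≥0∞} {x : ℝ≥0∞}
    (h : Fintype.card α * x ≤ ∑ v, f v) : x ≤ ⨆ v, f v := by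
  have hsum : ∑ v, f v ≤ Fintype.card α * ⨆ v, f v := by
    simpa using Finset.sum_le_card_nsmul Finset.univ f _ fun v _ ↦ le_iSup f v
  exact (ENNReal.mul_le_mul_iff_right (by simp [Fintype.card_ne_zero])
    (ENNReal.natCast_ne_top _)).mp (h.trans hsum)

lemma assouad_of_tvDist_le [DecidableEq ι] (hτ : 0 ≤ τ)
    (μ : (ι → ℤˣ) → Measure (EuclideanSpace ℝ ι)) [∀ v, IsProbabilityMeasure (μ v)] {δ : ℝ≥0∞}
    (h : ∀ v i, tvDist (μ v) (μ (Function.update v i (-v i))) ≤ δ) :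
    ENNReal.ofReal (τ ^ 2) * (Fintype.card ι * (1 - δ)) ≤
      2 * ⨆ v, ∫⁻ t, ENNReal.ofReal (dist t (cubeVertex c τ v) ^ 2) ∂μ v := by
  have averaged (i : ι) : Fintype.card (ι → ℤˣ) * (1 - δ) ≤ ∑ v, 2 * μ v (wrongSide c v i) := by
    have flip : Function.Involutive fun v : ι → ℤˣ ↦ Function.update v i (-v i) := fun v ↦ by simp
    calc Fintype.card (ι → ℤˣ) * (1 - δ) = ∑ _v : ι → ℤˣ, (1 - δ) := by simp
      _ ≤ ∑ v, (μ v (wrongSide c v i) + μ (Function.update v i (-v i))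
          (wrongSide c (Function.update v i (-v i)) i)) :=
        Finset.sum_le_sum fun v _ ↦ one_sub_le_measure_wrongSide_add c v i _ _ (h v i)
      _ = ∑ v, 2 * μ v (wrongSide c v i) := by
        rw [Finset.sum_add_distrib, flip.bijective.sum_comp fun v ↦ μ v (wrongSide c v i),
          ← two_mul, Finset.mul_sum]
  rw [ENNReal.mul_iSup]
  refine le_iSup_of_card_mul_le_sum ?_
  calc (Fintype.card (ι → ℤˣ) : ℝ≥0∞) * (ENNReal.ofReal (τ ^ 2) * (Fintype.card ι * (1 - δ)))
      = ENNReal.ofReal (τ ^ 2) * ∑ _i : ι, Fintype.card (ι → ℤˣ) * (1 - δ) := by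
        rw [Finset.sum_const, Finset.card_univ, nsmul_eq_mul]
        ring
    _ ≤ ENNReal.ofReal (τ ^ 2) * ∑ i, ∑ v, 2 * μ v (wrongSide c v i) := by
        gcongr with i
        exact averaged i
    _ = ∑ v, 2 * (ENNReal.ofReal (τ ^ 2) * ∑ i, μ v (wrongSide c v i)) := by
        rw [Finset.sum_comm, Finset.mul_sum]
        simp only [← Finset.mul_sum, mul_left_comm]
    _ ≤ _ := by
        gcongr with v
        exact sum_measure_wrongSide_le_lintegral_dist_sq c τ v hτ (μ v)

lemma exp_neg_sub_sq_add_exp_neg_add_sq_le (u : ℝ) :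
    exp (-(u - 1) ^ 2) + exp (-(u + 1) ^ 2) ≤ 1 + exp (-1) := by
  have le_one (x : ℝ) : exp (-x ^ 2) ≤ 1 := exp_le_one_iff.mpr (by nlinarith [sq_nonneg x])
  rcases le_total 0 u with h | h
  · exact add_le_add (le_one _) (exp_le_exp.mpr (by nlinarith))
  · rw [add_comm]
    exact add_le_add (le_one _) (exp_le_exp.mpr (by nlinarith))

lemma sum_exp_neg_dist_sq_div_le [DecidableEq ι] (t : EuclideanSpace ℝ ι) (hτ : τ ≠ 0) :
    ∑ v, exp (-(dist t (cubeVertex c τ v) ^ 2 / τ ^ 2)) ≤ (1 + exp (-1)) ^ Fintype.card ι := by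
  have coord (v : ι → ℤˣ) : exp (-(dist t (cubeVertex c τ v) ^ 2 / τ ^ 2)) =
      ∏ i, exp (-((t i - c i) / τ - (v i : ℤ)) ^ 2) := by
    rw [← exp_sum, dist_cubeVertex_sq, Finset.sum_div, ← Finset.sum_neg_distrib]
    congr 1
    refine Finset.sum_congr rfl fun i _ ↦ ?_
    field_simp
  simp_rw [coord]
  rw [← Fintype.prod_sum fun i (u : ℤˣ) ↦ exp (-((t i - c i) / τ - (u : ℤ)) ^ 2),
    Fintype.card, ← Finset.prod_const]
  refine Finset.prod_le_prod (fun i _ ↦ by positivity) fun i _ ↦ ?_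
  simpa [UnitsInt.univ] using exp_neg_sub_sq_add_exp_neg_add_sq_le ((t i - c i) / τ)

-- `1 + a ≤ D + exp (a - D)`: the exponential, unlike `D`, can be averaged over a family of `D`s.
lemma one_add_le_lintegral_add_mul_lintegral_exp {α : Type*} [MeasurableSpace α] {a : ℝ}
    (ha : 0 ≤ a) {P Q : Measure α} [IsProbabilityMeasure P] {K : ℝ≥0∞} (hPQ : P ≤ K • Q)
    {D : α → ℝ} (hD : Measurable D) (hD₀ : 0 ≤ D) :
    1 + ENNReal.ofReal a ≤
      ∫⁻ t, ENNReal.ofReal (D t) ∂P + K * ∫⁻ t, ENNReal.ofReal (exp a * exp (-D t)) ∂Q := by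
  have pointwise (t : α) : 1 + ENNReal.ofReal a ≤
      ENNReal.ofReal (D t) + ENNReal.ofReal (exp a * exp (-D t)) := by
    rw [← ENNReal.ofReal_one, ← ENNReal.ofReal_add zero_le_one ha,
      ← ENNReal.ofReal_add (hD₀ t) (by positivity), ← exp_add]
    exact ENNReal.ofReal_le_ofReal (by linarith [add_one_le_exp (a + -D t)])
  calc 1 + ENNReal.ofReal a = ∫⁻ _, (1 + ENNReal.ofReal a) ∂P := by simp
    _ ≤ ∫⁻ t, (ENNReal.ofReal (D t) + ENNReal.ofReal (exp a * exp (-D t))) ∂P :=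
      lintegral_mono pointwise
    _ = ∫⁻ t, ENNReal.ofReal (D t) ∂P + ∫⁻ t, ENNReal.ofReal (exp a * exp (-D t)) ∂P :=
      lintegral_add_left (by fun_prop) _
    _ ≤ _ := by
      gcongr
      rw [← smul_eq_mul, ← lintegral_smul_measure]
      exact lintegral_mono' hPQ le_rfl

lemma packing_of_measure_le_smul {a : ℝ} (ha : 0 ≤ a) (hτ : τ ≠ 0)
    (μ : (ι → ℤˣ) → Measure (EuclideanSpace ℝ ι)) [∀ v, IsProbabilityMeasure (μ v)]
    (ν : Measure (EuclideanSpace ℝ ι)) [IsProbabilityMeasure ν] {K : ℝ≥0∞}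
    (hμν : ∀ v, μ v ≤ K • ν)
    (hK : K * ENNReal.ofReal (exp a * (1 + exp (-1)) ^ Fintype.card ι) ≤ 2 ^ Fintype.card ι) :
    ENNReal.ofReal (τ ^ 2 * a) ≤
      ⨆ v, ∫⁻ t, ENNReal.ofReal (dist t (cubeVertex c τ v) ^ 2) ∂μ v := by
  classical
  set D : (ι → ℤˣ) → EuclideanSpace ℝ ι → ℝ := fun v t ↦ dist t (cubeVertex c τ v) ^ 2 / τ ^ 2
  have hD (v : ι → ℤˣ) : Measurable (D v) := by fun_prop
  have moment : K * ∑ v, ∫⁻ t, ENNReal.ofReal (exp a * exp (-D v t)) ∂ν ≤ 2 ^ Fintype.card ι := by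
    refine le_trans ?_ hK
    gcongr
    rw [← lintegral_finsetSum _ fun v _ ↦ by fun_prop]
    refine (lintegral_mono fun t ↦ ?_).trans_eq (by rw [lintegral_const, measure_univ, mul_one])
    rw [← ENNReal.ofReal_sum_of_nonneg fun v _ ↦ by positivity, ← Finset.mul_sum]
    exact ENNReal.ofReal_le_ofReal (by gcongr; exact sum_exp_neg_dist_sq_div_le c τ t hτ)
  have hcard : (Fintype.card (ι → ℤˣ) : ℝ≥0∞) = 2 ^ Fintype.card ι := by simp
  have scaled : ENNReal.ofReal a ≤ ⨆ v, ∫⁻ t, ENNReal.ofReal (D v t) ∂μ v := by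
    refine le_iSup_of_card_mul_le_sum <| (ENNReal.add_le_add_iff_left
      (a := (2 : ℝ≥0∞) ^ Fintype.card ι) (by simp)).mp ?_
    calc (2 : ℝ≥0∞) ^ Fintype.card ι + Fintype.card (ι → ℤˣ) * ENNReal.ofReal a
        = ∑ _v : ι → ℤˣ, (1 + ENNReal.ofReal a) := by
          rw [Finset.sum_const, Finset.card_univ, nsmul_eq_mul, hcard, mul_one_add]
      _ ≤ ∑ v, (∫⁻ t, ENNReal.ofReal (D v t) ∂μ v +
          K * ∫⁻ t, ENNReal.ofReal (exp a * exp (-D v t)) ∂ν) :=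
        Finset.sum_le_sum fun v _ ↦ one_add_le_lintegral_add_mul_lintegral_exp ha (hμν v) (hD v)
          fun t ↦ by positivity
      _ ≤ _ := by
        rw [Finset.sum_add_distrib, ← Finset.mul_sum, add_comm]
        gcongr
  rw [ENNReal.ofReal_mul (sq_nonneg τ)]
  grw [scaled]
  rw [ENNReal.mul_iSup]
  gcongr with v
  rw [← lintegral_const_mul _ (by fun_prop)]
  refine lintegral_mono fun t ↦ ?_
  rw [← ENNReal.ofReal_mul (sq_nonneg τ), mul_div_cancel₀ _ (pow_ne_zero 2 hτ)]

end Hypercube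

lemma hammingDist_update_le_one {ι : Type*} [Fintype ι] [DecidableEq ι] {X : ι → Type*}
    [∀ i, DecidableEq (X i)] (x : ∀ i, X i) (i : ι) (a : X i) :
    hammingDist (Function.update x i a) x ≤ 1 := by
  rw [hammingDist, Finset.card_le_one]
  intro j hj k hk
  simp only [Finset.mem_filter, Finset.mem_univ, true_and] at hj hk
  have eq_i {j : ι} (hj : Function.update x i a j ≠ x j) : j = i := by
    by_contra h
    exact hj (Function.update_of_ne h a x)
  rw [eq_i hj, eq_i hk]

section OutputLaw

open InformationTheory

variable {α β : Type*} [MeasurableSpace α] [MeasurableSpace β] {n : ℕ}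

lemma tvDist_bind_le (κ : Kernel α β) [IsMarkovKernel κ] (P Q : Measure α)
    [IsProbabilityMeasure P] [IsProbabilityMeasure Q] : tvDist (κ ∘ₘ P) (κ ∘ₘ Q) ≤ tvDist P Q := by
  refine tvDist_le_iff.mpr fun S hS ↦ ?_
  rw [Measure.bind_apply hS κ.aemeasurable, Measure.bind_apply hS κ.aemeasurable]
  simpa using lintegral_le_add_tvDist_mul P Q (fun _ ↦ zero_le)
    fun x ↦ (prob_le_one (μ := κ x)).trans_eq (zero_add 1).symm

/-- The law of the output of the mechanism `M` on `n` i.i.d. observations of law `P`. -/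
noncomputable abbrev outputLaw (M : Kernel (Fin n → α) β) (P : Measure α) : Measure β :=
  M ∘ₘ Measure.pi fun _ : Fin n ↦ P

lemma tvDist_outputLaw_le_of_klDiv_le (M : Kernel (Fin n → α) β) [IsMarkovKernel M]
    (P Q : Measure α) [IsProbabilityMeasure P] [IsProbabilityMeasure Q] {κ : ℝ}
    (h : klDiv P Q ≤ ENNReal.ofReal κ) :
    tvDist (outputLaw M P) (outputLaw M Q) ≤ ENNReal.ofReal √(n * κ / 2) := by
  refine (tvDist_bind_le M _ _).trans (tvDist_le_sqrt_of_klDiv_le ?_)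
  rw [klDiv_pi_const, ENNReal.ofReal_mul n.cast_nonneg, ENNReal.ofReal_natCast]
  gcongr

variable [DecidableEq α]

lemma tvDist_le_sqrt_of_isZCDP {M : Kernel (Fin n → α) β} [IsMarkovKernel M] {ρ : ℝ}
    (hM : IsZCDP M ρ) {x y : Fin n → α} (hxy : hammingDist x y ≤ 1) :
    tvDist (M x) (M y) ≤ ENNReal.ofReal √ρ := by
  have hKL : klDiv (M x) (M y) ≤ ENNReal.ofReal (ρ * 2) :=
    (klDiv_le_renyiDiv _ _ one_lt_two).trans (hM x y hxy 2 one_lt_two)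
  simpa using tvDist_le_sqrt_of_klDiv_le hKL

lemma tvDist_outputLaw_le_of_isZCDP {M : Kernel (Fin n → α) β} [IsMarkovKernel M] {ρ : ℝ}
    (hM : IsZCDP M ρ) (P Q : Measure α) [IsProbabilityMeasure P] [IsProbabilityMeasure Q] :
    tvDist (outputLaw M P) (outputLaw M Q) ≤ tvDist P Q * ENNReal.ofReal √ρ * n := by
  refine tvDist_le_iff.mpr fun S hS ↦ ?_
  rw [Measure.bind_apply hS M.aemeasurable, Measure.bind_apply hS M.aemeasurable]
  simpa using lintegral_pi_le_add_of_update_le_add (fun _ : Fin n ↦ le_rfl)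
    (M.measurable_coe hS) fun x i a ↦ (measure_le_add_tvDist _ _ hS).trans
      (by gcongr; exact tvDist_le_sqrt_of_isZCDP hM (hammingDist_update_le_one x i a))

lemma outputLaw_le_smul_of_isDP {M : Kernel (Fin n → α) β} {ε t : ℝ}
    (hM : IsDP M ε 0) (hε : 0 ≤ ε) (ht : 0 ≤ t) (P Q : Measure α) [IsProbabilityMeasure P]
    [IsProbabilityMeasure Q] (h : tvDist P Q ≤ ENNReal.ofReal t) :
    outputLaw M P ≤ ENNReal.ofReal ((1 + t * (exp ε - 1)) ^ n) • outputLaw M Q := by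
  have hb : 0 ≤ exp ε - 1 := sub_nonneg.mpr (one_le_exp hε)
  have stable (S : Set β) (hS : MeasurableSet S) (x : Fin n → α) (i : Fin n) (a : α) :
      M (Function.update x i a) S ≤ (1 + ENNReal.ofReal (exp ε - 1)) * M x S := by
    rw [← ENNReal.ofReal_one, ← ENNReal.ofReal_add zero_le_one hb, add_sub_cancel]
    simpa using hM _ _ (hammingDist_update_le_one x i a) S hS
  refine Measure.le_iff.mpr fun S hS ↦ ?_
  rw [Measure.smul_apply, Measure.bind_apply hS M.aemeasurable,
    Measure.bind_apply hS M.aemeasurable, ENNReal.ofReal_pow (by positivity),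
    ENNReal.ofReal_add zero_le_one (by positivity), ENNReal.ofReal_mul ht, ENNReal.ofReal_one]
  simpa using lintegral_pi_le_mul_of_update_le_mul ENNReal.ofReal_ne_top (fun _ : Fin n ↦ h)
    (M.measurable_coe hS) (stable S hS)

end OutputLaw

section QuadraticKLFamily

open InformationTheory

variable {α E : Type*} [MeasurableSpace α] [PseudoMetricSpace E]

/-- The family `p` consists, over the parameter set `Θ`, of probability measures whose
Kullback-Leibler divergences are at most `γ` times the squared distance of the parameters. -/
structure HasQuadraticKL (p : E → Measure α) (Θ : Set E) (γ : ℝ) : Prop where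
  isProbabilityMeasure : ∀ θ ∈ Θ, IsProbabilityMeasure (p θ)
  klDiv_le : ∀ θ₁ ∈ Θ, ∀ θ₂ ∈ Θ, klDiv (p θ₁) (p θ₂) ≤ ENNReal.ofReal (γ * dist θ₂ θ₁ ^ 2)

lemma HasQuadraticKL.tvDist_le {p : E → Measure α} {Θ : Set E} {γ : ℝ}
    (hp : HasQuadraticKL p Θ γ) {θ₁ θ₂ : E} (h₁ : θ₁ ∈ Θ) (h₂ : θ₂ ∈ Θ) :
    tvDist (p θ₁) (p θ₂) ≤ ENNReal.ofReal √(γ * dist θ₂ θ₁ ^ 2 / 2) := by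
  have := hp.isProbabilityMeasure _ h₁
  have := hp.isProbabilityMeasure _ h₂
  exact tvDist_le_sqrt_of_klDiv_le (hp.klDiv_le _ h₁ _ h₂)

end QuadraticKLFamily

section Risk

variable {α E : Type*} [MeasurableSpace α] [PseudoMetricSpace E] [MeasurableSpace E] {n : ℕ}

/-- The worst-case risk `sup_{θ ∈ Θ} E dist(M(X), θ)²` of the mechanism `M`, where `X` consists of
`n` i.i.d. observations of law `p θ`. -/
noncomputable def worstCaseRisk (M : Kernel (Fin n → α) E) (Θ : Set E) (p : E → Measure α) :
    ℝ≥0∞ :=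
  ⨆ θ ∈ Θ, ∫⁻ x, ∫⁻ t, ENNReal.ofReal (dist t θ ^ 2) ∂M x ∂Measure.pi fun _ : Fin n ↦ p θ

lemma lintegral_outputLaw_le_worstCaseRisk [OpensMeasurableSpace E] (M : Kernel (Fin n → α) E)
    {Θ : Set E} (p : E → Measure α) {θ : E} (hθ : θ ∈ Θ) :
    ∫⁻ t, ENNReal.ofReal (dist t θ ^ 2) ∂outputLaw M (p θ) ≤ worstCaseRisk M Θ p := by
  rw [Measure.lintegral_bind M.aemeasurable (by fun_prop)]
  exact le_iSup₂ (f := fun θ _ ↦ ∫⁻ x, ∫⁻ t, ENNReal.ofReal (dist t θ ^ 2) ∂M x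
    ∂Measure.pi fun _ : Fin n ↦ p θ) θ hθ

end Risk

section MinimaxRisk

variable {α : Type*} [MeasurableSpace α] {d n : ℕ} {Θ : Set (EuclideanSpace ℝ (Fin d))}
  {p : EuclideanSpace ℝ (Fin d) → Measure α} {b : ℝ≥0∞}

lemma le_privMinimax {C : Kernel (Fin n → α) (EuclideanSpace ℝ (Fin d)) → Prop}
    (h : ∀ M : Kernel (Fin n → α) (EuclideanSpace ℝ (Fin d)), IsMarkovKernel M → C M →
      b ≤ worstCaseRisk M Θ p) :
    b ≤ privMinimax α d n C Θ p :=
  le_iInf₂ fun M hM ↦ h M hM.1 hM.2.1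

lemma le_minimaxRisk
    (h : ∀ M : Kernel (Fin n → α) (EuclideanSpace ℝ (Fin d)), IsMarkovKernel M →
      b ≤ worstCaseRisk M Θ p) :
    b ≤ _root_.minimaxRisk α d n Θ p := by
  refine le_iInf₂ fun f hf ↦ (h (Kernel.deterministic f hf.1) inferInstance).trans_eq ?_
  refine iSup_congr fun θ ↦ iSup_congr fun _ ↦ lintegral_congr fun x ↦ ?_
  rw [Kernel.deterministic_apply, lintegral_dirac' _ (by fun_prop)]

end MinimaxRisk

section CubeRisk

variable {α ι : Type*} [MeasurableSpace α] [Fintype ι] {n : ℕ} {c : EuclideanSpace ℝ ι} {τ : ℝ}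
  {Θ : Set (EuclideanSpace ℝ ι)} {p : EuclideanSpace ℝ ι → Measure α}

lemma iSup_lintegral_cubeVertex_le_worstCaseRisk
    (M : Kernel (Fin n → α) (EuclideanSpace ℝ ι)) (hcube : ∀ v, cubeVertex c τ v ∈ Θ) :
    ⨆ v, ∫⁻ t, ENNReal.ofReal (dist t (cubeVertex c τ v) ^ 2) ∂outputLaw M (p (cubeVertex c τ v)) ≤
      worstCaseRisk M Θ p :=
  iSup_le fun v ↦ lintegral_outputLaw_le_worstCaseRisk M p (hcube v)

lemma le_worstCaseRisk_of_tvDist_le (M : Kernel (Fin n → α) (EuclideanSpace ℝ ι))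
    [IsMarkovKernel M] (hp : ∀ θ ∈ Θ, IsProbabilityMeasure (p θ))
    (hcube : ∀ v, cubeVertex c τ v ∈ Θ) (hτ : 0 ≤ τ)
    (h : ∀ θ₁ ∈ Θ, ∀ θ₂ ∈ Θ, dist θ₂ θ₁ ^ 2 = 4 * τ ^ 2 →
      tvDist (outputLaw M (p θ₁)) (outputLaw M (p θ₂)) ≤ ENNReal.ofReal (15 / 16)) :
    ENNReal.ofReal (τ ^ 2 * Fintype.card ι / 32) ≤ worstCaseRisk M Θ p := by
  classical
  have (v : ι → ℤˣ) : IsProbabilityMeasure (p (cubeVertex c τ v)) := hp _ (hcube v)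
  have assouad := assouad_of_tvDist_le c τ hτ (fun v ↦ outputLaw M (p (cubeVertex c τ v)))
    fun v i ↦ h _ (hcube v) _ (hcube _) (dist_cubeVertex_update_neg_sq c τ v i)
  grw [iSup_lintegral_cubeVertex_le_worstCaseRisk M hcube] at assouad
  refine (ENNReal.mul_le_mul_iff_right two_ne_zero ENNReal.ofNat_ne_top).mp
    (le_of_eq_of_le ?_ assouad)
  rw [← ENNReal.ofReal_one, ← ENNReal.ofReal_sub _ (by norm_num), ← ENNReal.ofReal_natCast,
    ← ENNReal.ofReal_mul (by positivity), ← ENNReal.ofReal_mul (by positivity),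
    ← ENNReal.ofReal_ofNat 2, ← ENNReal.ofReal_mul two_pos.le]
  congr 1
  ring

lemma exp_mul_exp_mul_pow_le_two_pow (d : ℕ) :
    exp (d / 100) * (exp (d / 32) * (1 + exp (-1)) ^ d) ≤ 2 ^ d := by
  have exp_neg_one_le : exp (-1) ≤ 1 / 2 := by
    rw [exp_neg, ← one_div]
    exact one_div_le_one_div_of_le two_pos exp_one_gt_two.le
  have exp_le : exp (1 / 100 + 1 / 32) ≤ 5 / 4 :=
    (exp_bound_div_one_sub_of_interval (by norm_num) (by norm_num)).trans (by norm_num)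
  calc exp (d / 100) * (exp (d / 32) * (1 + exp (-1)) ^ d)
      = (exp (1 / 100 + 1 / 32) * (1 + exp (-1))) ^ d := by
        rw [mul_pow, ← exp_nat_mul, ← mul_assoc, ← exp_add]
        ring_nf
    _ ≤ (5 / 4 * (1 + 1 / 2)) ^ d := by gcongr
    _ ≤ 2 ^ d := by gcongr; norm_num

lemma le_worstCaseRisk_of_outputLaw_le_smul (M : Kernel (Fin n → α) (EuclideanSpace ℝ ι))
    [IsMarkovKernel M] (hp : ∀ θ ∈ Θ, IsProbabilityMeasure (p θ)) (hc : c ∈ Θ)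
    (hcube : ∀ v, cubeVertex c τ v ∈ Θ)
    {K : ℝ} (hK : K ≤ exp (Fintype.card ι / 100))
    (h : ∀ θ ∈ Θ, dist c θ ^ 2 = Fintype.card ι * τ ^ 2 →
      outputLaw M (p θ) ≤ ENNReal.ofReal K • outputLaw M (p c)) :
    ENNReal.ofReal (τ ^ 2 * Fintype.card ι / 32) ≤ worstCaseRisk M Θ p := by
  classical
  rcases eq_or_ne τ 0 with rfl | hτ
  · simp
  have (v : ι → ℤˣ) : IsProbabilityMeasure (p (cubeVertex c τ v)) := hp _ (hcube v)
  have := hp c hc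
  rw [mul_div_assoc]
  refine (packing_of_measure_le_smul c τ (by positivity) hτ
    (fun v ↦ outputLaw M (p (cubeVertex c τ v))) (outputLaw M (p c)) (fun v ↦ h _ (hcube v) ?_)
    ?_).trans (iSup_lintegral_cubeVertex_le_worstCaseRisk M hcube)
  · rw [dist_comm, dist_cubeVertex_center_sq]
  · rw [← ENNReal.ofReal_mul' (by positivity)]
    refine (ENNReal.ofReal_le_ofReal ((mul_le_mul_of_nonneg_right hK (by positivity)).trans
      (exp_mul_exp_mul_pow_le_two_pow _))).trans_eq ?_
    rw [ENNReal.ofReal_pow two_pos.le, ENNReal.ofReal_ofNat]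

end CubeRisk

section QuadraticKL

variable {α ι : Type*} [MeasurableSpace α] [Fintype ι] {n : ℕ} {c : EuclideanSpace ℝ ι} {τ : ℝ}
  {Θ : Set (EuclideanSpace ℝ ι)} {p : EuclideanSpace ℝ ι → Measure α} {γ : ℝ}
  {M : Kernel (Fin n → α) (EuclideanSpace ℝ ι)} [IsMarkovKernel M]

lemma HasQuadraticKL.le_worstCaseRisk (hp : HasQuadraticKL p Θ γ)
    (hcube : ∀ v, cubeVertex c τ v ∈ Θ) (hτ₀ : 0 ≤ τ) (hγ : 0 ≤ γ)
    (hτ : τ ≤ 1 / (64 * √(n * γ))) :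
    ENNReal.ofReal (τ ^ 2 * Fintype.card ι / 32) ≤ worstCaseRisk M Θ p := by
  refine le_worstCaseRisk_of_tvDist_le M hp.isProbabilityMeasure hcube hτ₀
    fun θ₁ h₁ θ₂ h₂ hdist ↦ ?_
  have := hp.isProbabilityMeasure _ h₁
  have := hp.isProbabilityMeasure _ h₂
  refine (tvDist_outputLaw_le_of_klDiv_le M _ _ (hp.klDiv_le _ h₁ _ h₂)).trans
    (ENNReal.ofReal_le_ofReal ?_)
  have hτ₁ : (τ * (64 * √(n * γ))) ^ 2 ≤ 1 :=
    pow_le_one₀ (by positivity) (mul_le_of_le_div₀ zero_le_one (by positivity) hτ)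
  rw [mul_pow, mul_pow, sq_sqrt (by positivity)] at hτ₁
  rw [hdist]
  exact sqrt_le_iff.mpr ⟨by norm_num, by linarith⟩

variable [DecidableEq α]

lemma HasQuadraticKL.le_worstCaseRisk_of_isZCDP (hp : HasQuadraticKL p Θ γ)
    (hcube : ∀ v, cubeVertex c τ v ∈ Θ) (hτ₀ : 0 ≤ τ) {ρ : ℝ} (hρ : 0 ≤ ρ) (hM : IsZCDP M ρ)
    (hτ : τ ≤ 1 / (64 ^ 2 * 2 * √2 * n * √(ρ * γ))) :
    ENNReal.ofReal (τ ^ 2 * Fintype.card ι / 32) ≤ worstCaseRisk M Θ p := by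
  refine le_worstCaseRisk_of_tvDist_le M hp.isProbabilityMeasure hcube hτ₀
    fun θ₁ h₁ θ₂ h₂ hdist ↦ ?_
  have := hp.isProbabilityMeasure _ h₁
  have := hp.isProbabilityMeasure _ h₂
  have ht : √(γ * dist θ₂ θ₁ ^ 2 / 2) = √2 * τ * √γ := by
    rw [hdist, show γ * (4 * τ ^ 2) / 2 = 2 * τ ^ 2 * γ by ring, sqrt_mul (by positivity),
      sqrt_mul zero_le_two, sqrt_sq hτ₀]
  have hτ₁ := mul_le_of_le_div₀ zero_le_one (by positivity) hτ
  rw [sqrt_mul hρ] at hτ₁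
  grw [tvDist_outputLaw_le_of_isZCDP hM, hp.tvDist_le h₁ h₂, ht]
  rw [← ENNReal.ofReal_natCast, ← ENNReal.ofReal_mul (by positivity),
    ← ENNReal.ofReal_mul (by positivity)]
  exact ENNReal.ofReal_le_ofReal (by linarith)

lemma one_add_mul_exp_sub_one_pow_le {ε t : ℝ} (hε₀ : 0 ≤ ε) (hε₁ : ε ≤ 1) (ht : 0 ≤ t) (n : ℕ) :
    (1 + t * (exp ε - 1)) ^ n ≤ exp (2 * n * ε * t) := by
  have hexp : exp ε - 1 ≤ 2 * ε := by
    simpa [abs_of_nonneg hε₀] using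
      (le_abs_self _).trans (abs_exp_sub_one_le (x := ε) (by rwa [abs_of_nonneg hε₀]))
  have hbase : 0 ≤ exp ε - 1 := sub_nonneg.mpr (one_le_exp hε₀)
  calc (1 + t * (exp ε - 1)) ^ n ≤ exp (t * (2 * ε)) ^ n := by
        gcongr
        rw [add_comm]
        grw [hexp]
        exact add_one_le_exp _
    _ = exp (2 * n * ε * t) := by
        rw [← exp_nat_mul]
        ring_nf

lemma HasQuadraticKL.le_worstCaseRisk_of_isDP_of_le_one (hp : HasQuadraticKL p Θ γ) (hc : c ∈ Θ)
    (hcube : ∀ v, cubeVertex c τ v ∈ Θ) (hτ₀ : 0 ≤ τ) {ε : ℝ} (hε₀ : 0 ≤ ε) (hε₁ : ε ≤ 1)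
    (hM : IsDP M ε 0) (hτ : τ ≤ √(Fintype.card ι) / (64 ^ 2 * √2 * n * ε * √γ)) :
    ENNReal.ofReal (τ ^ 2 * Fintype.card ι / 32) ≤ worstCaseRisk M Θ p := by
  set d := Fintype.card ι
  set t := √(γ * (d * τ ^ 2) / 2)
  have ht : √2 * t = τ * √d * √γ := by
    rw [← sqrt_mul zero_le_two, show 2 * (γ * (d * τ ^ 2) / 2) = τ ^ 2 * d * γ by ring,
      sqrt_mul (by positivity), sqrt_mul (by positivity), sqrt_sq hτ₀]
  refine le_worstCaseRisk_of_outputLaw_le_smul M hp.isProbabilityMeasure hc hcube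
    (K := (1 + t * (exp ε - 1)) ^ n) ?_ fun θ hθ hdist ↦ ?_
  · refine (one_add_mul_exp_sub_one_pow_le hε₀ hε₁ (sqrt_nonneg _) n).trans (exp_le_exp.mpr ?_)
    have hτ₁ := mul_le_mul_of_nonneg_right
      (mul_le_of_le_div₀ (sqrt_nonneg _) (by positivity) hτ) (sqrt_nonneg d)
    rw [mul_self_sqrt (by positivity)] at hτ₁
    have : 64 ^ 2 * (√2 ^ 2 * (n * ε * t)) ≤ d := by
      refine le_trans (le_of_eq ?_) hτ₁
      linear_combination (64 ^ 2 * n * ε * √2) * ht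
    rw [sq_sqrt zero_le_two] at this
    linarith
  · have := hp.isProbabilityMeasure _ hθ
    have := hp.isProbabilityMeasure _ hc
    refine outputLaw_le_smul_of_isDP hM hε₀ (sqrt_nonneg _) _ _ ?_
    simpa only [hdist] using hp.tvDist_le hθ hc

lemma le_worstCaseRisk_of_isDP_of_mul_le (hp : ∀ θ ∈ Θ, IsProbabilityMeasure (p θ)) (hc : c ∈ Θ)
    (hcube : ∀ v, cubeVertex c τ v ∈ Θ) {ε : ℝ} (hε : 0 ≤ ε) (hM : IsDP M ε 0)
    (hn : n * ε ≤ Fintype.card ι / 100) :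
    ENNReal.ofReal (τ ^ 2 * Fintype.card ι / 32) ≤ worstCaseRisk M Θ p := by
  refine le_worstCaseRisk_of_outputLaw_le_smul M hp hc hcube
    (K := (1 + 1 * (exp ε - 1)) ^ n) ?_ fun θ hθ _ ↦ ?_
  · rw [one_mul, add_sub_cancel, ← exp_nat_mul]
    exact exp_le_exp.mpr hn
  · have := hp _ hθ
    have := hp _ hc
    exact outputLaw_le_smul_of_isDP hM hε zero_le_one _ _ (by simpa using tvDist_le_one _ _)

lemma mul_sq_le_of_one_div_le_sqrt_div {d ε : ℝ} (hd : 0 ≤ d) (hε : 0 < ε) (hγ : 0 < γ)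
    (h : 1 / (64 * √(n * γ)) ≤ √d / (64 ^ 2 * √2 * n * ε * √γ)) :
    n * ε ^ 2 ≤ d / 8192 := by
  rcases n.eq_zero_or_pos with rfl | hn
  · simpa using by positivity
  rw [div_le_div_iff₀ (by positivity) (by positivity), sqrt_mul n.cast_nonneg, one_mul] at h
  have hsqrt : 64 * √2 * √n * ε ≤ √d := by
    refine le_of_mul_le_mul_right (le_of_eq_of_le ?_ h) (a := 64 * (√n * √γ)) (by positivity)
    linear_combination (64 ^ 2 * √2 * ε * √γ) * mul_self_sqrt n.cast_nonneg
  have hsq := pow_le_pow_left₀ (by positivity) hsqrt 2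
  simp only [mul_pow, sq_sqrt zero_le_two, sq_sqrt hd, sq_sqrt n.cast_nonneg] at hsq
  linarith

-- For `ε > 1` every replacement is charged the full factor `exp ε`; this costs only
-- `n ε ≤ n ε² ≤ d / 100` in the regime where the private term is the larger one.
lemma HasQuadraticKL.le_worstCaseRisk_of_isDP (hp : HasQuadraticKL p Θ γ) (hc : c ∈ Θ)
    (hcube : ∀ v, cubeVertex c τ v ∈ Θ) (hτ₀ : 0 ≤ τ) (hγ : 0 < γ) {ε : ℝ} (hε : 0 < ε)
    (hM : IsDP M ε 0) (hτ : τ ≤ √(Fintype.card ι) / (64 ^ 2 * √2 * n * ε * √γ))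
    (h : 1 / (64 * √(n * γ)) ≤ √(Fintype.card ι) / (64 ^ 2 * √2 * n * ε * √γ)) :
    ENNReal.ofReal (τ ^ 2 * Fintype.card ι / 32) ≤ worstCaseRisk M Θ p := by
  rcases le_total ε 1 with hε₁ | hε₁
  · exact hp.le_worstCaseRisk_of_isDP_of_le_one hc hcube hτ₀ hε.le hε₁ hM hτ
  · refine le_worstCaseRisk_of_isDP_of_mul_le hp.isProbabilityMeasure hc hcube hε.le hM ?_
    have hnε := mul_sq_le_of_one_div_le_sqrt_div (Nat.cast_nonneg _) hε hγ h
    have : (n : ℝ) * ε ≤ n * ε ^ 2 := by gcongr; nlinarith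
    linarith [Nat.cast_nonneg (α := ℝ) (Fintype.card ι)]

end QuadraticKL

theorem minimax_lb_of_kl_quadratic_general {𝓧 : Type*} [MeasurableSpace 𝓧] [DecidableEq 𝓧] {d n : ℕ}
    (Θ : Set (EuclideanSpace ℝ (Fin d)))
    (p : EuclideanSpace ℝ (Fin d) → Measure 𝓧)
    (hprob : ∀ θ ∈ Θ, IsProbabilityMeasure (p θ))
    (r₀ : ℝ) (hr₀ : 0 < r₀) (c : EuclideanSpace ℝ (Fin d))
    (hball : Metric.closedBall c r₀ ⊆ Θ)
    (γ : ℝ) (hγ : 0 < γ)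
    (hKL : ∀ θ₁ ∈ Θ, ∀ θ₂ ∈ Θ,
      klDiv' (p θ₁) (p θ₂) ≤ ENNReal.ofReal (γ * dist θ₂ θ₁ ^ 2)) :
    (ENNReal.ofReal
        (min (r₀ / Real.sqrt d) (1 / (64 * Real.sqrt (n * γ))) ^ 2 * d / 32)
      ≤ minimaxRisk 𝓧 d n Θ p) ∧
    (∀ ε : ℝ, 0 < ε →
      ENNReal.ofReal
          (max (min (r₀ / Real.sqrt d) (1 / (64 * Real.sqrt (n * γ))))
              (min (r₀ / Real.sqrt d)
                (Real.sqrt d / (64 ^ 2 * Real.sqrt 2 * n * ε * Real.sqrt γ))) ^ 2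
            * d / 32)
        ≤ privMinimax 𝓧 d n (fun M => IsDP M ε 0) Θ p) ∧
    (∀ ρ : ℝ, 0 < ρ →
      ENNReal.ofReal
          (max (min (r₀ / Real.sqrt d) (1 / (64 * Real.sqrt (n * γ))))
              (min (r₀ / Real.sqrt d)
                (1 / (64 ^ 2 * 2 * Real.sqrt 2 * n * Real.sqrt (ρ * γ)))) ^ 2
            * d / 32)
        ≤ privMinimax 𝓧 d n (fun M => IsZCDP M ρ) Θ p) := by
  have hp : HasQuadraticKL p Θ γ := ⟨hprob, fun θ₁ h₁ θ₂ h₂ ↦ by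
    have := hprob θ₁ h₁
    have := hprob θ₂ h₂
    simpa only [klDiv'_eq_klDiv] using hKL θ₁ h₁ θ₂ h₂⟩
  have hc : c ∈ Θ := hball (Metric.mem_closedBall_self hr₀.le)
  have hcube {a : ℝ} (ha : 0 ≤ a) (v : Fin d → ℤˣ) : cubeVertex c (min (r₀ / √d) a) v ∈ Θ :=
    hball (cubeVertex_mem_closedBall c _ v (by positivity) hr₀.le (by simp))
  have nonprivate (M : Kernel (Fin n → 𝓧) (EuclideanSpace ℝ (Fin d))) [IsMarkovKernel M] :
      ENNReal.ofReal (min (r₀ / √d) (1 / (64 * √(n * γ))) ^ 2 * d / 32) ≤ worstCaseRisk M Θ p := by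
    simpa using hp.le_worstCaseRisk (hcube (by positivity)) (by positivity) hγ.le (min_le_right _ _)
  refine ⟨le_minimaxRisk fun M _ ↦ nonprivate M,
    fun ε hε ↦ le_privMinimax fun M _ hM ↦ ?_, fun ρ hρ ↦ le_privMinimax fun M _ hM ↦ ?_⟩
  · rcases le_total (√d / (64 ^ 2 * √2 * n * ε * √γ)) (1 / (64 * √(n * γ))) with h | h
    · rw [max_eq_left (min_le_min_left _ h)]
      exact nonprivate M
    · rw [max_eq_right (min_le_min_left _ h)]
      simpa using hp.le_worstCaseRisk_of_isDP hc (hcube (by positivity)) (by positivity) hγ hε hM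
        (by simp) (by simpa using h)
  · rcases max_choice (min (r₀ / √d) (1 / (64 * √(n * γ))))
      (min (r₀ / √d) (1 / (64 ^ 2 * 2 * √2 * n * √(ρ * γ)))) with h | h <;> rw [h]
    · exact nonprivate M
    · simpa using hp.le_worstCaseRisk_of_isZCDP (hcube (by positivity)) (by positivity) hρ.le hM
        (min_le_right _ _)

/-- **Minimax lower bounds under a quadratic KL control**: let `(p θ)_{θ ∈ Θ}` be a family of
probability distributions, `Θ ⊆ ℝ^d` with `d ≥ 66` containing a Euclidean ball of radius
`r₀ > 0`, and `γ > 0` with `KL(p θ₁ ‖ p θ₂) ≤ γ ‖θ₂ - θ₁‖²` on `Θ`. Then: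
(i) the non-private minimax risk is at least `min(r₀/√d, 1/(64√(nγ)))² d / 32`;
(ii) the minimax risk over `ε`-DP mechanisms is at least
`max(min(r₀/√d, 1/(64√(nγ))), min(r₀/√d, √d/(64²√2 n ε √γ)))² d / 32`;
(iii) for `0 < ρ < 1`, the minimax risk over `ρ`-zCDP mechanisms is at least
`max(min(r₀/√d, 1/(64√(nγ))), min(r₀/√d, 1/(64² 2√2 n √(ργ))))² d / 32`. -/
theorem minimax_lb_of_kl_quadratic {𝓧 : Type*} [MeasurableSpace 𝓧] [DecidableEq 𝓧]
    {d n : ℕ} (hd : 66 ≤ d)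
    (Θ : Set (EuclideanSpace ℝ (Fin d)))
    (p : EuclideanSpace ℝ (Fin d) → Measure 𝓧)
    (hprob : ∀ θ ∈ Θ, IsProbabilityMeasure (p θ))
    (r₀ : ℝ) (hr₀ : 0 < r₀) (c : EuclideanSpace ℝ (Fin d))
    (hball : Metric.closedBall c r₀ ⊆ Θ)
    (γ : ℝ) (hγ : 0 < γ)
    (hKL : ∀ θ₁ ∈ Θ, ∀ θ₂ ∈ Θ,
      klDiv' (p θ₁) (p θ₂) ≤ ENNReal.ofReal (γ * dist θ₂ θ₁ ^ 2)) :
    (ENNReal.ofReal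
        (min (r₀ / Real.sqrt d) (1 / (64 * Real.sqrt (n * γ))) ^ 2 * d / 32)
      ≤ minimaxRisk 𝓧 d n Θ p) ∧
    (∀ ε : ℝ, 0 < ε →
      ENNReal.ofReal
          (max (min (r₀ / Real.sqrt d) (1 / (64 * Real.sqrt (n * γ))))
              (min (r₀ / Real.sqrt d)
                (Real.sqrt d / (64 ^ 2 * Real.sqrt 2 * n * ε * Real.sqrt γ))) ^ 2
            * d / 32)
        ≤ privMinimax 𝓧 d n (fun M => IsDP M ε 0) Θ p) ∧
    (∀ ρ : ℝ, 0 < ρ → ρ < 1 →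
      ENNReal.ofReal
          (max (min (r₀ / Real.sqrt d) (1 / (64 * Real.sqrt (n * γ))))
              (min (r₀ / Real.sqrt d)
                (1 / (64 ^ 2 * 2 * Real.sqrt 2 * n * Real.sqrt (ρ * γ)))) ^ 2
            * d / 32)
        ≤ privMinimax 𝓧 d n (fun M => IsZCDP M ρ) Θ p) := by
  obtain ⟨nonprivate, dp, zcdp⟩ :=
    minimax_lb_of_kl_quadratic_general Θ p hprob r₀ hr₀ c hball γ hγ hKL (n := n)
  exact ⟨nonprivate, dp, fun ρ hρ _ ↦ zcdp ρ hρ⟩
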